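/- Let Θ be a real symplectic 2n×2n matrix (ΘᵀJΘ = J) and α ∈ ℂ with |α| = 1, α ≠ 1. Define the 2n×2n complex matrix M_α = (1/(1 − ᾱ)) · J · (ᾱI + I − ᾱΘ − Θ^{−1}). Then M_α is Hermitian, and the negative Maslov index i(Γ(Θ), Δ, Γ(αΘ)), computed in (ℂ^{2n} × ℂ^{2n}, (−σ_ℂ) ⊕ σ_ℂ), equals the number of negative eigenvalues of M_α counted with multiplicity. -/

import Mathlib

open scoped ComplexOrder

noncomputable section

/-- `ℂ^{2n}`, written with coordinates indexed by `Fin n ⊕ Fin n`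
(first block = `q`-coordinates, second block = `p`-coordinates). -/
abbrev CV (n : ℕ) := (Fin n ⊕ Fin n) → ℂ

/-- The sesquilinear extension `σ_ℂ(X,Y) = σ(X̄,Y)` of the standard symplectic form
`σ(x,y) = ⟨Jx,y⟩`, `J = [[0,−I],[I,0]]`, to `ℂ^{2n}` (conjugate-linear in the first
argument). -/
def sigmaC (n : ℕ) : CV n →ₛₗ[starRingEnd ℂ] CV n →ₗ[ℂ] ℂ :=
  LinearMap.mk₂'ₛₗ (starRingEnd ℂ) (RingHom.id ℂ)
    (fun x y => (∑ i : Fin n, (starRingEnd ℂ) (x (Sum.inl i)) * y (Sum.inr i)) -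
      ∑ i : Fin n, (starRingEnd ℂ) (x (Sum.inr i)) * y (Sum.inl i))
    (by intro x x' y; simp [add_mul, Finset.sum_add_distrib]; ring)
    (by
      intro c x y
      simp only [Pi.smul_apply, smul_eq_mul, map_mul]
      rw [mul_sub, Finset.mul_sum, Finset.mul_sum]
      congr 1 <;> exact Finset.sum_congr rfl (by intros; ring))
    (by intro x y y'; simp [mul_add, Finset.sum_add_distrib]; ring)
    (by
      intro c x y
      simp only [Pi.smul_apply, smul_eq_mul, RingHom.id_apply]
      rw [mul_sub, Finset.mul_sum, Finset.mul_sum]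
      congr 1 <;> exact Finset.sum_congr rfl (by intros; ring))

/-- The orthogonal of a subspace with respect to a sesquilinear form. -/
def sesqOrth {W : Type*} [AddCommGroup W] [Module ℂ W]
    (f : W →ₛₗ[starRingEnd ℂ] W →ₗ[ℂ] ℂ) (L : Submodule ℂ W) : Submodule ℂ W where
  carrier := {u | ∀ w ∈ L, f u w = 0}
  add_mem' := by
    intro a b ha hb w hw
    simp [map_add, ha w hw, hb w hw]
  zero_mem' := by
    intro w hw
    simp
  smul_mem' := by
    intro c u hu w hw
    simp [LinearMap.map_smulₛₗ, hu w hw]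

/-- A complex subspace is Lagrangian for a sesquilinear form when it coincides with its
orthogonal. -/
def IsLagrangianC {W : Type*} [AddCommGroup W] [Module ℂ W]
    (f : W →ₛₗ[starRingEnd ℂ] W →ₗ[ℂ] ℂ) (L : Submodule ℂ W) : Prop :=
  L = sesqOrth f L

/-- Negative inertia index of the (Hermitian) Maslov form of a triple of complex
Lagrangian subspaces: the supremum of complex dimensions of subspaces of
`L1 ∩ (L0 + L2)` on which `m(l1) = σ_ℂ(l0,l2)` is negative definite (negativity in the
complex order: real and `< 0`). -/
def maslovIndexC {W : Type*} [AddCommGroup W] [Module ℂ W]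
    (f : W →ₛₗ[starRingEnd ℂ] W →ₗ[ℂ] ℂ) (L0 L1 L2 : Submodule ℂ W) : ℕ :=
  sSup {d : ℕ | ∃ S : Submodule ℂ W, S ≤ L1 ⊓ (L0 ⊔ L2) ∧
    (∀ v ∈ S, v ≠ 0 → ∀ l0 ∈ L0, ∀ l2 ∈ L2, v = l0 + l2 → f l0 l2 < 0) ∧
    Module.finrank ℂ ↥S = d}

/-- The direct sum of two sesquilinear forms on a product space. -/
def sesqProd {W1 W2 : Type*} [AddCommGroup W1] [Module ℂ W1] [AddCommGroup W2] [Module ℂ W2]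
    (f : W1 →ₛₗ[starRingEnd ℂ] W1 →ₗ[ℂ] ℂ) (g : W2 →ₛₗ[starRingEnd ℂ] W2 →ₗ[ℂ] ℂ) :
    (W1 × W2) →ₛₗ[starRingEnd ℂ] (W1 × W2) →ₗ[ℂ] ℂ :=
  LinearMap.mk₂'ₛₗ (starRingEnd ℂ) (RingHom.id ℂ)
    (fun x y => f x.1 y.1 + g x.2 y.2)
    (by intro x x' y; simp [map_add]; ring)
    (by intro c x y; simp [LinearMap.map_smulₛₗ, smul_eq_mul, mul_add])
    (by intro x y y'; simp [map_add]; ring)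
    (by intro c x y; simp [smul_eq_mul, mul_add])

/-- The direct sum of `k` copies of a sesquilinear form. -/
def sesqPi {W : Type*} [AddCommGroup W] [Module ℂ W] (k : ℕ)
    (f : W →ₛₗ[starRingEnd ℂ] W →ₗ[ℂ] ℂ) :
    (Fin k → W) →ₛₗ[starRingEnd ℂ] (Fin k → W) →ₗ[ℂ] ℂ :=
  LinearMap.mk₂'ₛₗ (starRingEnd ℂ) (RingHom.id ℂ)
    (fun x y => ∑ i, f (x i) (y i))
    (by intro x x' y; simp [map_add, Finset.sum_add_distrib])
    (by intro c x y; simp [LinearMap.map_smulₛₗ, Finset.mul_sum])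
    (by intro x y y'; simp [map_add, Finset.sum_add_distrib])
    (by intro c x y; simp [Finset.mul_sum])

/-- The vertical Lagrangian subspace `Π = {(p,0)} ⊂ ℂ^{2n}`. -/
def PiV (n : ℕ) : Submodule ℂ (CV n) where
  carrier := {x | ∀ i, x (Sum.inr i) = 0}
  add_mem' := by intro a b ha hb i; simp [ha i, hb i]
  zero_mem' := by intro i; simp
  smul_mem' := by intro c x hx i; simp [hx i]

/-- The standard symplectic matrix `J = [[0,−I],[I,0]]`. -/
def symplJ (n : ℕ) : Matrix (Fin n ⊕ Fin n) (Fin n ⊕ Fin n) ℝ :=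
  Matrix.fromBlocks 0 (-1) 1 0

/-- The `ℂ`-linear action on `ℂ^{2n}` of a real `2n×2n` matrix. -/
def cAction {n : ℕ} (Θ : Matrix (Fin n ⊕ Fin n) (Fin n ⊕ Fin n) ℝ) : CV n →ₗ[ℂ] CV n :=
  (Θ.map (Complex.ofReal)).mulVecLin


/-- The form `(−σ_ℂ) ⊕ σ_ℂ` on `ℂ^{2n} × ℂ^{2n}`. -/
def sigma2C (n : ℕ) :
    (CV n × CV n) →ₛₗ[starRingEnd ℂ] (CV n × CV n) →ₗ[ℂ] ℂ :=
  sesqProd (-(sigmaC n)) (sigmaC n)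

/-- The form `(−σ_ℂ)^{⊕k} ⊕ σ_ℂ^{⊕k}` on `Σ^k × Σ^k`, `Σ = ℂ^{2n}`. -/
def bigSigmaC (n k : ℕ) :
    ((Fin k → CV n) × (Fin k → CV n)) →ₛₗ[starRingEnd ℂ]
      ((Fin k → CV n) × (Fin k → CV n)) →ₗ[ℂ] ℂ :=
  sesqProd (-(sesqPi k (sigmaC n))) (sesqPi k (sigmaC n))

/-- The Lagrangian subspace `Π² = Π × Π` of `ℂ^{2n} × ℂ^{2n}`. -/
def Pi2Sub (n : ℕ) : Submodule ℂ (CV n × CV n) := (PiV n).prod (PiV n)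

/-- The diagonal Lagrangian subspace `Δ = {(ξ,ξ)}` of `ℂ^{2n} × ℂ^{2n}`. -/
def DiaSub (n : ℕ) : Submodule ℂ (CV n × CV n) :=
  LinearMap.graph (LinearMap.id : CV n →ₗ[ℂ] CV n)

/-- The Lagrangian subspace `Π^{2k} = Π × ⋯ × Π` of `Σ^k × Σ^k`. -/
def Pi2kSub (n k : ℕ) : Submodule ℂ ((Fin k → CV n) × (Fin k → CV n)) :=
  (Submodule.pi Set.univ fun _ : Fin k => PiV n).prod
    (Submodule.pi Set.univ fun _ : Fin k => PiV n)

/-- The graph `Γ = {(ξ1,…,ξk,Θξ1,…,Θξk)}` of the diagonal action of `Θ` on `Σ^k`. -/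
def GamSub (n k : ℕ) (Θ : Matrix (Fin n ⊕ Fin n) (Fin n ⊕ Fin n) ℝ) :
    Submodule ℂ ((Fin k → CV n) × (Fin k → CV n)) :=
  LinearMap.graph (LinearMap.pi fun i : Fin k => (cAction Θ).comp (LinearMap.proj i))

/-- The graph `Δ^↺ = {(ξ1,…,ξk,ξ2,…,ξk,ξ1)}` of the cyclic shift on `Σ^k`. -/
def DcycSub (n k : ℕ) [NeZero k] : Submodule ℂ ((Fin k → CV n) × (Fin k → CV n)) :=
  LinearMap.graph (LinearMap.funLeft ℂ (CV n) (fun i : Fin k => i + 1))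

/-- The matrix `M_α = (1/(1−ᾱ)) J (ᾱ + 1 − ᾱΘ − Θ⁻¹)` over `ℂ`. -/
def Malpha (n : ℕ) (Θ : Matrix (Fin n ⊕ Fin n) (Fin n ⊕ Fin n) ℝ) (α : ℂ) :
    Matrix (Fin n ⊕ Fin n) (Fin n ⊕ Fin n) ℂ :=
  (1 / (1 - (starRingEnd ℂ) α)) •
    ((symplJ n).map Complex.ofReal *
      ((starRingEnd ℂ) α • (1 : Matrix (Fin n ⊕ Fin n) (Fin n ⊕ Fin n) ℂ) + 1
        - (starRingEnd ℂ) α • Θ.map Complex.ofReal - (Θ.map Complex.ofReal)⁻¹))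

/-!
If `f` is a skew-Hermitian form, `T` an isometry of `f`, and `(ξ, ξ) = (a, Ta) + (b, αTb)`, then
`ξ = a + b` and `T⁻¹ξ = a + αb`. Hence `a` and `b` are recovered from `ξ` and `T⁻¹ξ`, and the
Maslov form at `(ξ, ξ)` is `(α - 1) f(a, b) = f(ξ, (1 - α)⁻¹(αT + T⁻¹ - (α + 1))ξ)`. For `f = σ_ℂ`
the matrix of this form is `M_ᾱ`, which is the transpose of the Hermitian matrix `M_α` and so has
the same eigenvalues. In coordinates with respect to an orthonormal eigenbasis the form is a
weighted sum of squares, whose negative index is the number of negative weights.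
-/

section NegativeIndex

open Matrix Module

variable {𝕜 V ι : Type*} [RCLike 𝕜] [AddCommGroup V] [Module 𝕜 V]

/-- A sesquilinear form is negative definite on a subspace. Since `<` is the complex order, this
includes that the form takes real values on the diagonal. -/
def IsNegDefOn (B : V →ₗ⋆[𝕜] V →ₗ[𝕜] 𝕜) (S : Submodule 𝕜 V) : Prop :=
  ∀ v ∈ S, v ≠ 0 → B v v < 0

/-- The negative inertia index of a sesquilinear form: the largest dimension of a subspace on
which it is negative definite. The supremum is the junk value `0` if the dimensions are unbounded,
which only happens when `V` has infinite dimension. -/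
def negIndex (B : V →ₗ⋆[𝕜] V →ₗ[𝕜] 𝕜) : ℕ :=
  sSup {d | ∃ S : Submodule 𝕜 V, IsNegDefOn B S ∧ finrank 𝕜 S = d}

variable [Fintype ι]

lemma IsNegDefOn.finrank_le_card_neg_weights {B : V →ₗ⋆[𝕜] V →ₗ[𝕜] 𝕜} {b : Basis ι 𝕜 V}
    {w : ι → ℝ} (hB : ∀ v, B v v = ((∑ i, w i * ‖b.repr v i‖ ^ 2 : ℝ) : 𝕜))
    {S : Submodule 𝕜 V} (hS : IsNegDefOn B S) :
    finrank 𝕜 S ≤ (Finset.univ.filter fun i => w i < 0).card := by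
  let negCoords : S →ₗ[𝕜] {i // w i < 0} → 𝕜 :=
    LinearMap.funLeft 𝕜 𝕜 Subtype.val ∘ₗ b.equivFun.toLinearMap ∘ₗ S.subtype
  have negCoords_injective : Function.Injective negCoords := by
    rw [injective_iff_map_eq_zero]
    rintro ⟨v, hv⟩ hv_coords
    by_contra hne
    have hneg := hS v hv fun h => hne (Subtype.ext h)
    rw [hB, RCLike.ofReal_lt_zero] at hneg
    refine hneg.not_ge (Finset.sum_nonneg fun i _ => ?_)
    rcases lt_or_ge (w i) 0 with hi | hi
    · have hvi : b.repr v i = 0 := congrFun hv_coords ⟨i, hi⟩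
      simp [hvi]
    · positivity
  simpa [Fintype.card_subtype] using
    LinearMap.finrank_le_finrank_of_injective negCoords_injective

lemma isNegDefOn_span_neg_weights {B : V →ₗ⋆[𝕜] V →ₗ[𝕜] 𝕜} {b : Basis ι 𝕜 V} {w : ι → ℝ}
    (hB : ∀ v, B v v = ((∑ i, w i * ‖b.repr v i‖ ^ 2 : ℝ) : 𝕜)) :
    IsNegDefOn B (Submodule.span 𝕜 (b '' {i | w i < 0})) := by
  intro v hv hv0
  rw [b.mem_span_image] at hv
  have neg_of_ne_zero (i : ι) (hi : b.repr v i ≠ 0) : w i < 0 := hv (Finsupp.mem_support_iff.2 hi)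
  obtain ⟨j, hj⟩ : ∃ j, b.repr v j ≠ 0 := by
    by_contra! h
    exact hv0 (b.repr.map_eq_zero_iff.1 (Finsupp.ext h))
  rw [hB, RCLike.ofReal_lt_zero]
  refine Finset.sum_neg' (fun i _ => ?_) ⟨j, Finset.mem_univ j, ?_⟩
  · by_cases hi : b.repr v i = 0
    · simp [hi]
    · exact mul_nonpos_of_nonpos_of_nonneg (neg_of_ne_zero i hi).le (sq_nonneg _)
  · exact mul_neg_of_neg_of_pos (neg_of_ne_zero j hj) (by positivity)

theorem negIndex_eq_card_neg_weights {B : V →ₗ⋆[𝕜] V →ₗ[𝕜] 𝕜} {b : Basis ι 𝕜 V} {w : ι → ℝ}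
    (hB : ∀ v, B v v = ((∑ i, w i * ‖b.repr v i‖ ^ 2 : ℝ) : 𝕜)) :
    negIndex B = (Finset.univ.filter fun i => w i < 0).card := by
  have finrank_span : finrank 𝕜 (Submodule.span 𝕜 (b '' {i | w i < 0})) =
      (Finset.univ.filter fun i => w i < 0).card := by
    rw [Set.image_eq_range, ← Fintype.card_subtype]
    exact finrank_span_eq_card (b.linearIndependent.comp _ Subtype.val_injective)
  refine IsGreatest.csSup_eq ⟨⟨_, isNegDefOn_span_neg_weights hB, finrank_span⟩, ?_⟩
  rintro _ ⟨S, hS, rfl⟩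
  exact hS.finrank_le_card_neg_weights hB

variable [DecidableEq ι]

lemma star_dotProduct_mulVec_eq_sum_eigenvalues {M : Matrix ι ι 𝕜} (hM : M.IsHermitian)
    (x : ι → 𝕜) :
    star x ⬝ᵥ M *ᵥ x = ((∑ i, hM.eigenvalues i *
      ‖(star (hM.eigenvectorUnitary : Matrix ι ι 𝕜) *ᵥ x) i‖ ^ 2 : ℝ) : 𝕜) := by
  set U : Matrix ι ι 𝕜 := (hM.eigenvectorUnitary : Matrix ι ι 𝕜)
  have spectral : M = U * diagonal (RCLike.ofReal ∘ hM.eigenvalues) * Uᴴ := by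
    simpa only [Unitary.conjStarAlgAut_apply, star_eq_conjTranspose] using hM.spectral_theorem
  have star_mulVec_U : star x ᵥ* U = star (Uᴴ *ᵥ x) := by
    rw [star_mulVec, conjTranspose_conjTranspose]
  conv_lhs => rw [spectral]
  rw [← mulVec_mulVec, ← mulVec_mulVec, dotProduct_mulVec, star_mulVec_U, star_eq_conjTranspose]
  simp only [dotProduct, mulVec_diagonal, RCLike.ofReal_sum, Function.comp_apply]
  refine Finset.sum_congr rfl fun i _ => ?_
  rw [RCLike.ofReal_mul, RCLike.ofReal_pow, ← RCLike.conj_mul]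
  exact mul_left_comm _ _ _

theorem negIndex_eq_card_neg_eigenvalues {B : V →ₗ⋆[𝕜] V →ₗ[𝕜] 𝕜} (b : Basis ι 𝕜 V)
    (hB : (LinearMap.toMatrix₂ b b B).IsHermitian) :
    negIndex B = (Finset.univ.filter fun i => hB.eigenvalues i < 0).card := by
  let toEigencoords : (ι → 𝕜) ≃ₗ[𝕜] (ι → 𝕜) :=
    UnitaryGroup.toLinearEquiv (star hB.eigenvectorUnitary)
  refine negIndex_eq_card_neg_weights (b := .ofEquivFun (b.equivFun ≪≫ₗ toEigencoords))
    fun v => ?_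
  rw [apply_eq_star_dotProduct_toMatrix₂_mulVec b, star_dotProduct_mulVec_eq_sum_eigenvalues hB]
  rfl

end NegativeIndex

section MaslovForm

variable {V W : Type*} [AddCommGroup V] [Module ℂ V] [AddCommGroup W] [Module ℂ W]

theorem maslovIndexC_eq_negIndex {f : W →ₗ⋆[ℂ] W →ₗ[ℂ] ℂ} {L0 L1 L2 : Submodule ℂ W}
    {B : V →ₗ⋆[ℂ] V →ₗ[ℂ] ℂ} {e : V →ₗ[ℂ] W} (he : Function.Injective e)
    (he_range : LinearMap.range e = L1) (hL : L1 ≤ L0 ⊔ L2)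
    (hB : ∀ x, ∀ l0 ∈ L0, ∀ l2 ∈ L2, e x = l0 + l2 → f l0 l2 = B x x) :
    maslovIndexC f L0 L1 L2 = negIndex B := by
  unfold maslovIndexC negIndex
  congr 1
  ext d
  rw [inf_eq_left.2 hL, ← he_range]
  constructor
  · rintro ⟨S, hS, hneg, rfl⟩
    obtain ⟨S, rfl⟩ : ∃ S' : Submodule ℂ V, S'.map e = S :=
      ⟨S.comap e, Submodule.map_comap_eq_of_le hS⟩
    refine ⟨S, fun x hx hx0 => ?_, (S.equivMapOfInjective e he).finrank_eq⟩
    obtain ⟨l0, h0, l2, h2, hsum⟩ := Submodule.mem_sup.1 (hL (he_range ▸ e.mem_range_self x))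
    rw [← hB x l0 h0 l2 h2 hsum.symm]
    exact hneg _ (Submodule.mem_map_of_mem hx) (he.ne_iff' (map_zero e) |>.2 hx0) l0 h0 l2 h2
      hsum.symm
  · rintro ⟨S, hS, rfl⟩
    refine ⟨S.map e, LinearMap.map_le_range, ?_, (S.equivMapOfInjective e he).finrank_eq.symm⟩
    rintro _ ⟨x, hx, rfl⟩ hex l0 h0 l2 h2 hsum
    rw [hB x l0 h0 l2 h2 hsum]
    exact hS x hx (ne_zero_of_map hex)

lemma mul_conj_eq_one {α : ℂ} (hα : ‖α‖ = 1) : α * starRingEnd ℂ α = 1 := by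
  simp [Complex.mul_conj', hα]

lemma inv_one_sub_conj {α : ℂ} (hα : ‖α‖ = 1) (hα1 : α ≠ 1) :
    (1 - starRingEnd ℂ α)⁻¹ = -α * (1 - α)⁻¹ := by
  have hsub : 1 - α ≠ 0 := sub_ne_zero.2 hα1.symm
  have hconj : 1 - starRingEnd ℂ α ≠ 0 := by simpa using (map_ne_zero (starRingEnd ℂ)).2 hsub
  field_simp
  linear_combination -mul_conj_eq_one hα

/-- The Maslov form of the triple `(Γ(T), Δ, Γ(αT))` for an isometry `T` of `f` and `α ≠ 1` of
modulus one, transported from `Δ` to `V` along `ξ ↦ (ξ, ξ)`. -/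
def graphMaslovForm (f : V →ₗ⋆[ℂ] V →ₗ[ℂ] ℂ) (T : V ≃ₗ[ℂ] V) (α : ℂ) : V →ₗ⋆[ℂ] V →ₗ[ℂ] ℂ :=
  f.compl₂ ((1 - α)⁻¹ • (α • T.toLinearMap + T.symm.toLinearMap - (α + 1) • LinearMap.id))

variable {f : V →ₗ⋆[ℂ] V →ₗ[ℂ] ℂ} {T : V ≃ₗ[ℂ] V} {α : ℂ}

lemma graphMaslovForm_apply (x y : V) :
    graphMaslovForm f T α x y =
      (1 - α)⁻¹ * (α * f x (T y) + f x (T.symm y) - (α + 1) * f x y) := by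
  simp [graphMaslovForm]

lemma isSymm_graphMaslovForm (hf : ∀ x y, starRingEnd ℂ (f x y) = -f y x)
    (hT : ∀ x y, f (T x) (T y) = f x y) (hα : ‖α‖ = 1) (hα1 : α ≠ 1) :
    (graphMaslovForm f T α).IsSymm := by
  refine ⟨fun x y => ?_⟩
  have hT_left : f (T y) x = f y (T.symm x) := by rw [← hT y, T.apply_symm_apply]
  have hT_symm_left : f (T.symm y) x = f y (T x) := by rw [← hT, T.apply_symm_apply]
  simp only [graphMaslovForm_apply, map_mul, map_sub, map_add, map_inv₀, map_one, hf,
    inv_one_sub_conj hα hα1, hT_left, hT_symm_left]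
  linear_combination (1 - α)⁻¹ * (f y (T.symm x) - f y x) * mul_conj_eq_one hα

lemma sesqProd_graph_eq_graphMaslovForm (hT : ∀ x y, f (T x) (T y) = f x y) (hα : ‖α‖ = 1)
    (hα1 : α ≠ 1) {x a b : V} (hx : a + b = x) (hTx : T a + α • T b = x) :
    sesqProd (-f) f (a, T a) (b, α • T b) = graphMaslovForm f T α x x := by
  have hsub : 1 - α ≠ 0 := sub_ne_zero.2 hα1.symm
  have hsymm : T.symm x = a + α • b := by rw [T.symm_apply_eq, map_add, map_smul, hTx]
  have swap : f b a = α * f a b := by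
    have hiso : f (T.symm x) (T.symm x) = f x x := by rw [← hT, T.apply_symm_apply]
    rw [hsymm, ← hx] at hiso
    simp only [map_add, LinearMap.add_apply, map_smul, LinearMap.map_smulₛₗ, LinearMap.smul_apply,
      smul_eq_mul] at hiso
    apply mul_left_cancel₀ hsub
    linear_combination α * hiso - (f b a + α * f b b) * mul_conj_eq_one hα
  have hxT : f x (T x) = f (a + α • b) x := by rw [← hsymm, ← hT (T.symm x), T.apply_symm_apply]
  calc sesqProd (-f) f (a, T a) (b, α • T b) = (α - 1) * f a b := by
        simp only [sesqProd, LinearMap.neg_apply, LinearMap.mk₂'ₛₗ_apply, map_smul, hT, smul_eq_mul]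
        ring
    _ = graphMaslovForm f T α x x := by
        rw [graphMaslovForm_apply, eq_inv_mul_iff_mul_eq₀ hsub, hxT, hsymm, ← hx]
        simp only [map_add, LinearMap.add_apply, map_smul, LinearMap.map_smulₛₗ,
          LinearMap.smul_apply, smul_eq_mul]
        linear_combination (α - 1) * swap - (f b a + f b b) * mul_conj_eq_one hα

lemma graph_id_le_graph_sup_graph_smul (T : V ≃ₗ[ℂ] V) (hα1 : α ≠ 1) :
    LinearMap.graph LinearMap.id ≤
      LinearMap.graph T.toLinearMap ⊔ LinearMap.graph (α • T.toLinearMap) := by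
  rintro ⟨x, y⟩ hxy
  obtain rfl : y = x := hxy
  have hsub : 1 - α ≠ 0 := sub_ne_zero.2 hα1.symm
  obtain ⟨b, hb⟩ : ∃ b, (1 - α) • b = y - T.symm y := ⟨_, smul_inv_smul₀ hsub _⟩
  have hsymm : y - b + α • b = T.symm y := by
    rw [← sub_sub_cancel y (T.symm y), ← hb]; module
  refine Submodule.mem_sup.2 ⟨(y - b, T (y - b)), rfl, (b, α • T b), rfl, ?_⟩
  rw [Prod.mk_add_mk, sub_add_cancel, ← map_smul, ← map_add, hsymm, T.apply_symm_apply]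

theorem maslovIndexC_graph_diagonal (hT : ∀ x y, f (T x) (T y) = f x y) (hα : ‖α‖ = 1)
    (hα1 : α ≠ 1) :
    maslovIndexC (sesqProd (-f) f) (LinearMap.graph T.toLinearMap)
        (LinearMap.graph LinearMap.id) (LinearMap.graph (α • T.toLinearMap)) =
      negIndex (graphMaslovForm f T α) := by
  refine maslovIndexC_eq_negIndex (e := LinearMap.id.prod LinearMap.id)
    (fun x y h => congrArg Prod.fst h) (LinearMap.graph_eq_range_prod _).symm
    (graph_id_le_graph_sup_graph_smul T hα1) ?_
  rintro x ⟨a, a'⟩ (rfl : a' = T a) ⟨b, b'⟩ (rfl : b' = α • T b) hsum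
  exact sesqProd_graph_eq_graphMaslovForm hT hα hα1 (congrArg Prod.fst hsum).symm
    (congrArg Prod.snd hsum).symm

end MaslovForm

section Symplectic

open Matrix

variable {n : ℕ} {Θ : Matrix (Fin n ⊕ Fin n) (Fin n ⊕ Fin n) ℝ} {α : ℂ}

lemma map_ofReal_symplJ (n : ℕ) : (symplJ n).map Complex.ofReal = Matrix.J (Fin n) ℂ :=
  Matrix.map_J (Fin n) Complex.ofRealHom

lemma sigmaC_eq_neg_dotProduct (x y : CV n) :
    sigmaC n x y = -(star x ⬝ᵥ Matrix.J (Fin n) ℂ *ᵥ y) := by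
  simp only [sigmaC, LinearMap.mk₂'ₛₗ_apply, dotProduct, Pi.star_apply, RCLike.star_def, Matrix.J,
    fromBlocks_mulVec, zero_mulVec, neg_mulVec, one_mulVec, zero_add, add_zero,
    Fintype.sum_sum_type, Sum.elim_inl, Sum.elim_inr, Pi.neg_apply, Function.comp_apply, mul_neg,
    Finset.sum_neg_distrib]
  ring

lemma conj_sigmaC (x y : CV n) : starRingEnd ℂ (sigmaC n x y) = -sigmaC n y x := by
  simp only [sigmaC, LinearMap.mk₂'ₛₗ_apply, map_sub, map_sum, map_mul, Complex.conj_conj,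
    neg_sub, mul_comm]

lemma isUnit_det_map_ofReal (hΘ : Θ ∈ symplecticGroup (Fin n) ℝ) :
    IsUnit (Θ.map Complex.ofReal).det :=
  SymplecticGroup.symplectic_det (SymplecticGroup.map_mem hΘ Complex.ofRealHom)

lemma conjTranspose_mul_J_mul_map_ofReal (hΘ : Θ ∈ symplecticGroup (Fin n) ℝ) :
    (Θ.map Complex.ofReal)ᴴ * Matrix.J (Fin n) ℂ * Θ.map Complex.ofReal = Matrix.J (Fin n) ℂ := by
  have conjTranspose_eq : (Θ.map Complex.ofReal)ᴴ = (Θ.map Complex.ofReal)ᵀ := by ext; simp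
  rw [conjTranspose_eq]
  exact SymplecticGroup.mem_iff'.1 (SymplecticGroup.map_mem hΘ Complex.ofRealHom)

/-- The action of a real symplectic matrix on `ℂ^{2n}`, as a linear automorphism. -/
def cActionEquiv (hΘ : Θ ∈ symplecticGroup (Fin n) ℝ) : CV n ≃ₗ[ℂ] CV n :=
  .ofLinearMap (cAction Θ) (Θ.map Complex.ofReal)⁻¹.mulVecLin
    (by rw [cAction, ← mulVecLin_mul, mul_nonsing_inv _ (isUnit_det_map_ofReal hΘ), mulVecLin_one])
    (by rw [cAction, ← mulVecLin_mul, nonsing_inv_mul _ (isUnit_det_map_ofReal hΘ), mulVecLin_one])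

lemma cActionEquiv_apply (hΘ : Θ ∈ symplecticGroup (Fin n) ℝ) (x : CV n) :
    cActionEquiv hΘ x = Θ.map Complex.ofReal *ᵥ x :=
  rfl

lemma cActionEquiv_symm_apply (hΘ : Θ ∈ symplecticGroup (Fin n) ℝ) (x : CV n) :
    (cActionEquiv hΘ).symm x = (Θ.map Complex.ofReal)⁻¹ *ᵥ x :=
  rfl

lemma sigmaC_cActionEquiv (hΘ : Θ ∈ symplecticGroup (Fin n) ℝ) (x y : CV n) :
    sigmaC n (cActionEquiv hΘ x) (cActionEquiv hΘ y) = sigmaC n x y := by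
  rw [sigmaC_eq_neg_dotProduct, sigmaC_eq_neg_dotProduct, cActionEquiv_apply, cActionEquiv_apply,
    star_mulVec, ← dotProduct_mulVec, mulVec_mulVec, mulVec_mulVec,
    conjTranspose_mul_J_mul_map_ofReal hΘ]

lemma graphMaslovForm_sigmaC_apply (hΘ : Θ ∈ symplecticGroup (Fin n) ℝ) (α : ℂ) (x y : CV n) :
    graphMaslovForm (sigmaC n) (cActionEquiv hΘ) α x y =
      star x ⬝ᵥ Malpha n Θ (starRingEnd ℂ α) *ᵥ y := by
  rw [graphMaslovForm_apply, cActionEquiv_apply, cActionEquiv_symm_apply]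
  simp only [sigmaC_eq_neg_dotProduct, Malpha, map_ofReal_symplJ, Complex.conj_conj, smul_mulVec,
    ← mulVec_mulVec, add_mulVec, sub_mulVec, one_mulVec, mulVec_add, mulVec_sub, mulVec_smul,
    dotProduct_add, dotProduct_sub, dotProduct_smul, smul_eq_mul]
  ring

lemma toMatrix₂_graphMaslovForm_sigmaC (hΘ : Θ ∈ symplecticGroup (Fin n) ℝ) (α : ℂ) :
    LinearMap.toMatrix₂ (Pi.basisFun ℂ _) (Pi.basisFun ℂ _)
      (graphMaslovForm (sigmaC n) (cActionEquiv hΘ) α) = Malpha n Θ (starRingEnd ℂ α) := by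
  ext i j
  rw [LinearMap.toMatrix₂_apply, graphMaslovForm_sigmaC_apply]
  simp

lemma isHermitian_malpha (hΘ : Θ ∈ symplecticGroup (Fin n) ℝ) (hα : ‖α‖ = 1) (hα1 : α ≠ 1) :
    (Malpha n Θ α).IsHermitian := by
  have hsymm : (graphMaslovForm (sigmaC n) (cActionEquiv hΘ) (starRingEnd ℂ α)).IsSymm :=
    isSymm_graphMaslovForm conj_sigmaC (sigmaC_cActionEquiv hΘ) (by simpa using hα)
      ((map_ne_one_iff _ (starRingEnd ℂ).injective).2 hα1)
  simpa [toMatrix₂_graphMaslovForm_sigmaC] using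
    (LinearMap.isSymm_iff_isHermitian_toMatrix (Pi.basisFun ℂ _)).1 hsymm

lemma malpha_map_conj (n : ℕ) (Θ : Matrix (Fin n ⊕ Fin n) (Fin n ⊕ Fin n) ℝ) (α : ℂ) :
    (Malpha n Θ α).map (starRingEnd ℂ) = Malpha n Θ (starRingEnd ℂ α) := by
  have map_conj_ofReal (A : Matrix (Fin n ⊕ Fin n) (Fin n ⊕ Fin n) ℝ) :
      (A.map Complex.ofReal).map (starRingEnd ℂ) = A.map Complex.ofReal := by ext; simp
  have map_conj_inv : (Θ.map Complex.ofReal)⁻¹.map (starRingEnd ℂ) = (Θ.map Complex.ofReal)⁻¹ := by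
    calc _ = ((Θ.map Complex.ofReal)⁻¹)ᴴᵀ := rfl
      _ = _ := by
        rw [conjTranspose_nonsing_inv, transpose_nonsing_inv]
        exact congrArg _ (map_conj_ofReal Θ)
  simp only [Malpha, Matrix.map_smul' _ _ _ (map_mul (starRingEnd ℂ)), Matrix.map_mul,
    Matrix.map_sub _ (map_sub (starRingEnd ℂ)),
    Matrix.map_add _ (map_add (starRingEnd ℂ)), map_conj_ofReal, map_conj_inv,
    Matrix.map_one _ (map_zero (starRingEnd ℂ)) (map_one (starRingEnd ℂ)), map_div₀, map_sub,
    map_one]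

lemma transpose_malpha (hM : (Malpha n Θ α).IsHermitian) :
    (Malpha n Θ α)ᵀ = Malpha n Θ (starRingEnd ℂ α) := by
  rw [← malpha_map_conj]
  conv_lhs => rw [← hM.eq]
  rfl

end Symplectic

/-- `M_α` is Hermitian and the negative Maslov index
`i(Γ(Θ), Δ, Γ(αΘ))` equals the number of negative eigenvalues of `M_α` counted with
multiplicity. -/
theorem maslov_index_eq_negative_eigenvalues
    (n : ℕ) (Θ : Matrix (Fin n ⊕ Fin n) (Fin n ⊕ Fin n) ℝ)
    (hΘ : Θ.transpose * symplJ n * Θ = symplJ n)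
    (α : ℂ) (hα : ‖α‖ = 1) (hα1 : α ≠ 1) :
    (Malpha n Θ α).IsHermitian ∧
    ∀ hM : (Malpha n Θ α).IsHermitian,
      maslovIndexC (sigma2C n) (LinearMap.graph (cAction Θ)) (DiaSub n)
          (LinearMap.graph (α • cAction Θ))
        = (Finset.univ.filter fun i => hM.eigenvalues i < 0).card := by
  have hsymp : Θ ∈ Matrix.symplecticGroup (Fin n) ℝ := SymplecticGroup.mem_iff'.2 hΘ
  refine ⟨isHermitian_malpha hsymp hα hα1, fun hM => ?_⟩
  let B := graphMaslovForm (sigmaC n) (cActionEquiv hsymp) α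
  let b := Pi.basisFun ℂ (Fin n ⊕ Fin n)
  have toMatrix_B : LinearMap.toMatrix₂ b b B = (Malpha n Θ α).transpose := by
    rw [transpose_malpha hM, toMatrix₂_graphMaslovForm_sigmaC]
  have hB : (LinearMap.toMatrix₂ b b B).IsHermitian := toMatrix_B ▸ hM.transpose
  have eigenvalues_eq : hB.eigenvalues = hM.eigenvalues :=
    (hB.eigenvalues_eq_eigenvalues_iff hM).2 (by rw [toMatrix_B, Matrix.charpoly_transpose])
  calc _ = negIndex B := maslovIndexC_graph_diagonal (sigmaC_cActionEquiv hsymp) hα hα1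
    _ = (Finset.univ.filter fun i => hB.eigenvalues i < 0).card :=
        negIndex_eq_card_neg_eigenvalues b hB
    _ = _ := by rw [eigenvalues_eq]

end
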